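/- Let p > 3 be a prime. Then ∑_{k=1}^{(p-1)/2} H_{2k}·H_{2k-2}/k ≡ -4·q_p(2) + 2·q_p(2)^2 - (2/3)·q_p(2)^3 - (1/12)·B_{p-3} modulo p (as rational numbers). -/

import Mathlib

/-- Two rationals `a` and `b` are congruent modulo `p^r`:
the `p`-adic valuation of `a - b` is at least `r`, i.e. `a - b = c * p^r`
with the denominator of `c` not divisible by `p`. -/
def ratCongr (p r : ℕ) (a b : ℚ) : Prop :=
  ∃ c : ℚ, a - b = c * (p : ℚ) ^ r ∧ ¬ (p ∣ c.den)

/-- The Fermat quotient `q_p(2) = (2^(p-1) - 1)/p` (an integer for odd primes),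
viewed as a rational number. -/
def fermatQ (p : ℕ) : ℚ := ((2 : ℚ) ^ (p - 1) - 1) / p

open Finset

namespace NestedSum

section General

variable {R : Type*} [CommRing R]

/-- The sum of `f` over `j < n`. -/
def single (n : ℕ) (f : ℕ → R) : R := ∑ j ∈ range n, f j

/-- The sum of `f i * g j` over `i < j < n`. -/
def double (n : ℕ) (f g : ℕ → R) : R := ∑ j ∈ range n, single j f * g j

/-- The sum of `f i * g j * h k` over `i < j < k < n`. -/
def triple (n : ℕ) (f g h : ℕ → R) : R := ∑ k ∈ range n, double k f g * h k

@[simp] lemma single_zero (f : ℕ → R) : single 0 f = 0 := rfl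

@[simp] lemma double_zero (f g : ℕ → R) : double 0 f g = 0 := rfl

@[simp] lemma triple_zero (f g h : ℕ → R) : triple 0 f g h = 0 := rfl

lemma single_succ (n : ℕ) (f : ℕ → R) : single (n + 1) f = single n f + f n :=
  sum_range_succ ..

lemma double_succ (n : ℕ) (f g : ℕ → R) :
    double (n + 1) f g = double n f g + single n f * g n :=
  sum_range_succ ..

lemma triple_succ (n : ℕ) (f g h : ℕ → R) :
    triple (n + 1) f g h = triple n f g h + double n f g * h n :=
  sum_range_succ ..

lemma single_add (n : ℕ) (f g : ℕ → R) : single n (f + g) = single n f + single n g :=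
  sum_add_distrib

lemma double_add_add (n : ℕ) (f f' g g' : ℕ → R) :
    double n (f + f') (g + g') = double n f g + double n f g' + double n f' g + double n f' g' := by
  induction n with
  | zero => simp
  | succ n ih => simp only [double_succ, ih, single_add, Pi.add_apply]; ring

lemma single_mul_single (n : ℕ) (f g : ℕ → R) :
    single n f * single n g = double n f g + double n g f + single n (f * g) := by
  induction n with
  | zero => simp
  | succ n ih => simp only [double_succ, single_succ, Pi.mul_apply]; linear_combination ih

lemma single_mul_double (n : ℕ) (f g h : ℕ → R) :
    single n f * double n g h = triple n f g h + triple n g f h + triple n g h f +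
      double n (f * g) h + double n g (f * h) := by
  induction n with
  | zero => simp
  | succ n ih =>
    simp only [double_succ, single_succ, triple_succ, Pi.mul_apply]
    linear_combination ih + h n * single_mul_single n f g

lemma triple_eq_sum_middle (n : ℕ) (f g h : ℕ → R) :
    triple n f g h = ∑ j ∈ range n, g j * single j f * (single n h - single (j + 1) h) := by
  induction n with
  | zero => simp
  | succ n ih =>
    rw [sum_range_succ, triple_succ, ih, double, sum_mul, single_succ, sub_self, mul_zero, add_zero,
      ← sum_add_distrib]
    exact sum_congr rfl fun j _ => by ring

lemma sum_range_sum_convolution (n : ℕ) (f g : ℕ → R) :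
    ∑ m ∈ range n, ∑ k ∈ range (m + 1), f k * g (m - k) =
      ∑ k ∈ range n, f k * single (n - k) g := by
  rw [sum_range_diag_flip n fun a b => f a * g b]
  simp only [single, mul_sum]

lemma single_two_mul (n : ℕ) (f : ℕ → R) (hf : ∀ k, f (2 * k + 1) = 0) :
    single (2 * n) f = single n fun k => f (2 * k) := by
  induction n with
  | zero => simp
  | succ n ih => rw [show 2 * (n + 1) = 2 * n + 1 + 1 by ring]; simp [single_succ, ih, hf]

lemma double_two_mul (n : ℕ) (f g : ℕ → R) (hf : ∀ k, f (2 * k + 1) = 0)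
    (hg : ∀ k, g (2 * k + 1) = 0) :
    double (2 * n) f g = double n (fun k => f (2 * k)) fun k => g (2 * k) := by
  induction n with
  | zero => simp
  | succ n ih =>
    rw [show 2 * (n + 1) = 2 * n + 1 + 1 by ring]
    simp [double_succ, ih, hg, single_two_mul n f hf]

lemma sum_range_sub_reflect (n : ℕ) (f : ℕ → R) (h0 : f 0 = 0) (hn : f n = 0) :
    ∑ j ∈ range n, f (n - j) = ∑ j ∈ range n, f j := by
  have h := sum_range_reflect f (n + 1)
  rw [sum_range_succ, sum_range_succ, hn] at h
  simpa [h0] using h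

lemma sum_range_odd_fold (m : ℕ) (f : ℕ → R) (h : f (2 * m + 1) = 0) :
    ∑ j ∈ range (2 * m + 1), f j = ∑ j ∈ range (m + 1), (f j + f (2 * m + 1 - j)) := by
  have h1 := sum_range_add f (m + 1) (m + 1)
  rw [show m + 1 + (m + 1) = 2 * m + 1 + 1 by ring, sum_range_succ, h, add_zero] at h1
  rw [h1, sum_add_distrib, ← sum_range_reflect fun j => f (m + 1 + j)]
  congr 1
  refine sum_congr rfl fun j hj => ?_
  have hj' := mem_range.1 hj
  congr 1
  omega

/-- `f` vanishes at `0` and is multiplied by `ε` under the reflection `j ↦ n - j`. -/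
structure Reflects (n : ℕ) (ε : R) (f : ℕ → R) : Prop where
  map_zero : f 0 = 0
  map_sub : ∀ j ≤ n, f (n - j) = ε * f j
  sq : ε * ε = 1

namespace Reflects

variable {n : ℕ} {ε δ : R} {f g : ℕ → R}

lemma map_self (hf : Reflects n ε f) : f n = 0 := by
  simpa [hf.map_zero] using hf.map_sub 0 (Nat.zero_le n)

lemma single_eq (hf : Reflects n ε f) : single n f = ε * single n f := by
  conv_lhs => rw [single, ← sum_range_sub_reflect n f hf.map_zero hf.map_self]
  rw [single, mul_sum]
  exact sum_congr rfl fun j hj => hf.map_sub j (mem_range.1 hj).le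

lemma single_sub (hf : Reflects n ε f) {j : ℕ} (hj : j ≤ n) :
    single (n - j) f = ε * (single n f - single (j + 1) f) := by
  suffices h : ∀ m ≤ n, single m f = ε * (single n f - single (n - m + 1) f) by
    simpa [Nat.sub_sub_self hj] using h (n - j) (Nat.sub_le ..)
  intro m hm
  induction m with
  | zero => simp [single_succ, hf.map_self]
  | succ m ih =>
    have h := hf.map_sub m (by omega)
    rw [single_succ, ih (by omega), show n - (m + 1) + 1 = n - m by omega, single_succ, h]
    linear_combination -f m * hf.sq

lemma sum_convolution (hg : Reflects n ε g) :
    ∑ m ∈ range n, ∑ k ∈ range (m + 1), f k * g (m - k) = ε * double n f g := by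
  have h : ∑ k ∈ range n, f k * single (n - k) g =
      ε * (single n f * single n g - double n g f - single n (f * g)) := by
    rw [show single n f * single n g = ∑ k ∈ range n, f k * single n g from sum_mul .., double,
      single.eq_1 n (f * g), ← sum_sub_distrib, ← sum_sub_distrib, mul_sum]
    refine sum_congr rfl fun k hk => ?_
    rw [hg.single_sub (mem_range.1 hk).le, single_succ, Pi.mul_apply]
    ring
  rw [sum_range_sum_convolution, h, single_mul_single]
  ring

lemma double_eq (hf : Reflects n ε f) (hg : Reflects n δ g) :
    double n f g = ε * δ * double n g f := by
  have h : double n f g =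
      ε * δ * (single n g * single n f - double n f g - single n (f * g)) := by
    conv_lhs =>
      rw [double, ← sum_range_sub_reflect n _ (by simp) (by simp [hg.map_self])]
    rw [show single n g * single n f = ∑ k ∈ range n, g k * single n f from sum_mul .., double,
      single.eq_1 n (f * g), ← sum_sub_distrib, ← sum_sub_distrib, mul_sum]
    refine sum_congr rfl fun k hk => ?_
    rw [hf.single_sub (mem_range.1 hk).le, hg.map_sub k (mem_range.1 hk).le, single_succ,
      Pi.mul_apply]
    ring
  rw [single_mul_single, mul_comm g f] at h
  linear_combination h

lemma triple_eq (hf : Reflects n ε f) (hg : Reflects n δ g) :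
    triple n f g f = δ * triple n f g f := by
  rw [triple_eq_sum_middle, mul_sum,
    ← sum_range_sub_reflect n _ (by simp) (by simp [hg.map_self])]
  refine sum_congr rfl fun k hk => ?_
  have hk' := (mem_range.1 hk).le
  rw [single_succ (n - k), hf.single_sub hk', hf.map_sub k hk', hg.map_sub k hk', single_succ]
  linear_combination δ * g k * ε * (single n f - single k f - f k) * hf.single_eq +
    δ * g k * (single n f - single k f - f k) * single k f * hf.sq

end Reflects

end General

section ModP

variable (p : ℕ) [Fact p.Prime]

/-- `k ↦ 1 / k ^ s` modulo `p`, with value `0` at multiples of `p` when `s ≠ 0`. -/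
def recip (s : ℕ) (k : ℕ) : ZMod p := (k : ZMod p)⁻¹ ^ s

/-- `k ↦ (-1) ^ k / k ^ s` modulo `p`, with value `0` at multiples of `p` when `s ≠ 0`. -/
def altRecip (s : ℕ) (k : ℕ) : ZMod p := (-1) ^ k * (k : ZMod p)⁻¹ ^ s

lemma recip_mul_recip (s t : ℕ) : recip p s * recip p t = recip p (s + t) := by
  ext k; simp [recip, pow_add]

lemma altRecip_mul_recip (s t : ℕ) : altRecip p s * recip p t = altRecip p (s + t) := by
  ext k; simp [recip, altRecip, pow_add, mul_assoc]

lemma recip_mul_altRecip (s t : ℕ) : recip p s * altRecip p t = altRecip p (s + t) := by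
  rw [mul_comm, altRecip_mul_recip, add_comm]

lemma altRecip_mul_altRecip (s t : ℕ) : altRecip p s * altRecip p t = recip p (s + t) := by
  ext k
  have h : ((-1 : ZMod p) ^ k) * (-1) ^ k = 1 := by rw [← mul_pow]; simp
  simp only [Pi.mul_apply, recip, altRecip, pow_add]
  linear_combination (k : ZMod p)⁻¹ ^ s * (k : ZMod p)⁻¹ ^ t * h

variable {p}

@[simp] lemma recip_one_zero : recip p 1 0 = 0 := by simp [recip]

@[simp] lemma altRecip_one_zero : altRecip p 1 0 = 0 := by simp [altRecip]

lemma natCast_ne_zero_of_lt {k : ℕ} (h0 : 0 < k) (hk : k < p) : (k : ZMod p) ≠ 0 := by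
  rw [Ne, ZMod.natCast_eq_zero_iff]
  exact fun h => absurd (Nat.le_of_dvd h0 h) (by omega)

lemma reflects_recip {s : ℕ} (hs : s ≠ 0) : Reflects p ((-1 : ZMod p) ^ s) (recip p s) where
  map_zero := by simp [recip, hs]
  map_sub j hj := by
    rw [recip, recip, Nat.cast_sub hj, ← mul_pow]
    simp
  sq := by rw [← mul_pow]; simp

lemma reflects_altRecip (hp : p ≠ 2) {s : ℕ} (hs : s ≠ 0) :
    Reflects p ((-1 : ZMod p) ^ (s + 1)) (altRecip p s) where
  map_zero := by simp [altRecip, hs]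
  map_sub j hj := by
    have hodd : Odd p := Fact.out (p := p.Prime).odd_of_ne_two hp
    have h : (-1 : ZMod p) ^ (p - j) = -(-1) ^ j := by
      have h1 : (-1 : ZMod p) ^ (p - j) * (-1) ^ j = -1 := by
        rw [← pow_add, Nat.sub_add_cancel hj, hodd.neg_one_pow]
      have h2 : ((-1 : ZMod p) ^ j) * (-1) ^ j = 1 := by rw [← mul_pow]; simp
      linear_combination (-1) ^ j * h1 - (-1) ^ (p - j) * h2
    rw [altRecip, altRecip, Nat.cast_sub hj, h, CharP.cast_eq_zero, zero_sub, inv_neg, neg_pow]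
    ring
  sq := by rw [← mul_pow]; simp

lemma sum_mul_recip_mul_recip_sub {n : ℕ} (hn : n < p) (u : ℕ → ZMod p) (hu : u 0 = 0) :
    ∑ k ∈ range (n + 1), u k * recip p 1 k * recip p 1 (n - k) =
      recip p 1 n * (∑ k ∈ range n, u k * recip p 1 k +
        ∑ k ∈ range (n + 1), u k * recip p 1 (n - k)) := by
  rw [sum_range_succ, sum_range_succ, Nat.sub_self, recip_one_zero, mul_zero, mul_zero, add_zero,
    add_zero, ← sum_add_distrib, mul_sum]
  refine sum_congr rfl fun k hk => ?_
  have hkn : k < n := mem_range.1 hk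
  rcases Nat.eq_zero_or_pos k with rfl | h0
  · simp [hu]
  have h1 := natCast_ne_zero_of_lt h0 (hkn.trans hn)
  have h2 := natCast_ne_zero_of_lt (by omega : 0 < n - k) (by omega : n - k < p)
  have h3 := natCast_ne_zero_of_lt (by omega : 0 < n) hn
  rw [Nat.cast_sub hkn.le] at h2
  simp only [recip, Nat.cast_sub hkn.le, pow_one]
  field_simp
  ring

lemma convolution_recip_recip {n : ℕ} (hn : n < p) :
    ∑ k ∈ range (n + 1), recip p 1 k * recip p 1 (n - k) =
      2 * (single n (recip p 1) * recip p 1 n) := by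
  let u : ℕ → ZMod p := fun k => if k = 0 then 0 else 1
  have hu (k : ℕ) : u k * recip p 1 k = recip p 1 k := by
    by_cases h : k = 0 <;> simp [u, h]
  have h := sum_mul_recip_mul_recip_sub hn u (by simp [u])
  simp only [hu] at h
  have h' : ∑ k ∈ range (n + 1), u k * recip p 1 (n - k) = single n (recip p 1) := by
    rw [← sum_range_reflect]
    simp only [Nat.add_sub_cancel]
    rw [sum_range_succ, single, Nat.sub_self]
    simp only [u, if_true, zero_mul, add_zero]
    refine sum_congr rfl fun k hk => ?_
    have hk' := mem_range.1 hk
    rw [if_neg (by omega), one_mul, Nat.sub_sub_self hk'.le]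
  rw [h, h', single]
  ring

lemma convolution_recip_two_recip {n : ℕ} (hn : n < p) :
    ∑ k ∈ range (n + 1), recip p 2 k * recip p 1 (n - k) =
      single n (recip p 2) * recip p 1 n + 2 * (single n (recip p 1) * recip p 2 n) := by
  have h := sum_mul_recip_mul_recip_sub hn (recip p 1) (by simp)
  have hr (k : ℕ) : recip p 1 k * recip p 1 k = recip p 2 k := congrFun (recip_mul_recip p 1 1) k
  simp only [hr] at h
  rw [h, convolution_recip_recip hn, ← hr n, single, single]
  ring

lemma convolution_single_recip_recip {n : ℕ} (hn : n < p) :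
    ∑ k ∈ range (n + 1), single k (recip p 1) * recip p 1 k * recip p 1 (n - k) =
      3 * (double n (recip p 1) (recip p 1) * recip p 1 n) := by
  have h := sum_range_sum_convolution n (recip p 1) (recip p 1)
  rw [sum_congr rfl fun m hm => convolution_recip_recip ((mem_range.1 hm).trans hn), ← mul_sum,
    ← sum_range_sub_reflect n (fun k => recip p 1 k * single (n - k) (recip p 1)) (by simp)
      (by simp)] at h
  have h' : ∑ k ∈ range (n + 1), single k (recip p 1) * recip p 1 (n - k) =
      2 * double n (recip p 1) (recip p 1) := by
    rw [sum_range_succ, Nat.sub_self, recip_one_zero, mul_zero, add_zero, double, h]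
    refine sum_congr rfl fun k hk => ?_
    rw [Nat.sub_sub_self (mem_range.1 hk).le, mul_comm]
  rw [sum_mul_recip_mul_recip_sub hn _ (single_zero _), h', double]
  ring

lemma neg_one_pow_mul_convolution (n : ℕ) (f g : ℕ → ZMod p) :
    ∑ k ∈ range (n + 1), ((-1) ^ k * f k) * ((-1) ^ (n - k) * g (n - k)) =
      (-1) ^ n * ∑ k ∈ range (n + 1), f k * g (n - k) := by
  rw [mul_sum]
  refine sum_congr rfl fun k hk => ?_
  have h : (-1 : ZMod p) ^ n = (-1) ^ k * (-1) ^ (n - k) := by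
    rw [← pow_add, Nat.add_sub_cancel' (Nat.lt_succ_iff.1 (mem_range.1 hk))]
  rw [h]
  ring

lemma double_altRecip_altRecip (hp : p ≠ 2) :
    double p (altRecip p 1) (altRecip p 1) = 2 * double p (recip p 1) (altRecip p 1) := by
  have h := (reflects_altRecip hp one_ne_zero).sum_convolution (f := altRecip p 1)
  simp only [one_add_one_eq_two, even_two, Even.neg_pow, one_pow, one_mul] at h
  rw [← h, double, mul_sum]
  refine sum_congr rfl fun n hn => ?_
  have h' := neg_one_pow_mul_convolution n (recip p 1) (recip p 1)
  rw [convolution_recip_recip (mem_range.1 hn)] at h'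
  refine h'.trans ?_
  simp only [altRecip, recip]
  ring

lemma double_altRecip_two_altRecip (hp : p ≠ 2) :
    double p (altRecip p 2) (altRecip p 1) =
      double p (recip p 2) (altRecip p 1) + 2 * double p (recip p 1) (altRecip p 2) := by
  have h := (reflects_altRecip hp one_ne_zero).sum_convolution (f := altRecip p 2)
  simp only [one_add_one_eq_two, even_two, Even.neg_pow, one_pow, one_mul] at h
  rw [← h, double, double, mul_sum, ← sum_add_distrib]
  refine sum_congr rfl fun n hn => ?_
  have h' := neg_one_pow_mul_convolution n (recip p 2) (recip p 1)
  rw [convolution_recip_two_recip (mem_range.1 hn)] at h'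
  refine h'.trans ?_
  simp only [altRecip, recip]
  ring

lemma triple_recip_altRecip_altRecip (hp : p ≠ 2) :
    triple p (recip p 1) (altRecip p 1) (altRecip p 1) =
      3 * triple p (recip p 1) (recip p 1) (altRecip p 1) := by
  have h := (reflects_altRecip hp one_ne_zero).sum_convolution
    (f := fun k => single k (recip p 1) * altRecip p 1 k)
  simp only [one_add_one_eq_two, even_two, Even.neg_pow, one_pow, one_mul] at h
  refine h.symm.trans ?_
  rw [triple, mul_sum]
  refine sum_congr rfl fun n hn => ?_
  have h' := neg_one_pow_mul_convolution n (fun k => single k (recip p 1) * recip p 1 k) (recip p 1)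
  rw [convolution_single_recip_recip (mem_range.1 hn)] at h'
  refine Eq.trans (sum_congr rfl fun k _ => ?_) (h'.trans ?_) <;>
  · simp only [altRecip, recip]
    ring

lemma eq_zero_of_eq_neg {x : ZMod p} (hp : p ≠ 2) (h : x = -x) : x = 0 := by
  have h2 : (2 : ZMod p) ≠ 0 := by
    exact_mod_cast natCast_ne_zero_of_lt two_pos
      (lt_of_le_of_ne (Fact.out (p := p.Prime)).two_le hp.symm)
  exact (mul_eq_zero.1 (by linear_combination h : 2 * x = 0)).resolve_left h2

lemma single_recip_eq_zero_of_odd (hp : p ≠ 2) {s : ℕ} (hs : Odd s) : single p (recip p s) = 0 :=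
  eq_zero_of_eq_neg hp <| by
    simpa [hs.neg_one_pow] using (reflects_recip (p := p) hs.pos.ne').single_eq

lemma single_altRecip_eq_zero_of_even (hp : p ≠ 2) {s : ℕ} (hs : Even s) (h0 : s ≠ 0) :
    single p (altRecip p s) = 0 :=
  eq_zero_of_eq_neg hp <| by
    simpa [hs.add_one.neg_one_pow] using (reflects_altRecip hp h0).single_eq

lemma sum_range_natCast {M : Type*} [AddCommMonoid M] (f : ZMod p → M) :
    ∑ k ∈ range p, f k = ∑ x, f x := by
  refine sum_nbij' (fun k => (k : ZMod p)) ZMod.val (by simp) (by simp [ZMod.val_lt]) ?_ (by simp)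
    (by simp)
  exact fun k hk => ZMod.val_cast_of_lt (mem_range.1 hk)

lemma inv_eq_pow_sub_two (hp : 2 < p) (x : ZMod p) : x⁻¹ = x ^ (p - 2) := by
  rcases eq_or_ne x 0 with rfl | hx
  · rw [inv_zero, zero_pow (by omega)]
  · rw [inv_eq_iff_eq_inv, ← one_div, eq_div_iff (pow_ne_zero _ hx), ← pow_succ',
      show p - 2 + 1 = p - 1 by omega, ZMod.pow_card_sub_one_eq_one hx]

lemma inv_sq_eq_pow_sub_three (hp : 3 < p) (x : ZMod p) : x⁻¹ ^ 2 = x ^ (p - 3) := by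
  rcases eq_or_ne x 0 with rfl | hx
  · rw [inv_zero, zero_pow two_ne_zero, zero_pow (by omega)]
  · rw [inv_pow, inv_eq_iff_eq_inv, ← one_div, eq_div_iff (pow_ne_zero _ hx), ← pow_add,
      show 2 + (p - 3) = p - 1 by omega, ZMod.pow_card_sub_one_eq_one hx]

lemma single_recip_two (hp : 3 < p) : single p (recip p 2) = 0 := by
  simp only [single, recip, inv_sq_eq_pow_sub_three hp]
  rw [sum_range_natCast fun x => x ^ (p - 3)]
  exact FiniteField.sum_pow_lt_card_sub_one _ _ (by rw [ZMod.card]; omega)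

lemma recip_add_altRecip_odd (s k : ℕ) : (recip p s + altRecip p s) (2 * k + 1) = 0 := by
  simp [recip, altRecip, pow_succ, pow_mul]

lemma two_pow_mul_recip_add_altRecip_even (hp : p ≠ 2) (s k : ℕ) :
    2 ^ s * (recip p (s + 1) + altRecip p (s + 1)) (2 * k) = recip p (s + 1) k := by
  have h2 : (2 : ZMod p) ≠ 0 := by
    exact_mod_cast natCast_ne_zero_of_lt two_pos
      (lt_of_le_of_ne (Fact.out (p := p.Prime)).two_le hp.symm)
  have h : (2 : ZMod p) ^ (s + 1) * 2⁻¹ ^ (s + 1) = 1 := by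
    rw [← mul_pow, mul_inv_cancel₀ h2, one_pow]
  simp only [recip, altRecip, Pi.add_apply, Nat.cast_mul, Nat.cast_ofNat, mul_inv, mul_pow, pow_mul]
  rw [neg_one_sq, one_pow]
  linear_combination (k : ZMod p)⁻¹ ^ (s + 1) * h

lemma single_half {m : ℕ} (hm : p = 2 * m + 1) (s : ℕ) :
    2 ^ s * single p (recip p (s + 1) + altRecip p (s + 1)) = single (m + 1) (recip p (s + 1)) := by
  have h := single_two_mul (m + 1) _ (recip_add_altRecip_odd (p := p) (s + 1))
  rw [show 2 * (m + 1) = 2 * m + 1 + 1 by ring, single_succ, recip_add_altRecip_odd, add_zero,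
    ← hm] at h
  rw [h, single, single, mul_sum]
  exact sum_congr rfl fun k _ => two_pow_mul_recip_add_altRecip_even (by omega) s k

lemma double_half {m : ℕ} (hm : p = 2 * m + 1) (s t : ℕ) :
    2 ^ (s + t) * double p (recip p (s + 1) + altRecip p (s + 1))
      (recip p (t + 1) + altRecip p (t + 1)) =
      double (m + 1) (recip p (s + 1)) (recip p (t + 1)) := by
  have h := double_two_mul (m + 1) _ _ (recip_add_altRecip_odd (p := p) (s + 1))
    (recip_add_altRecip_odd (t + 1))
  rw [show 2 * (m + 1) = 2 * m + 1 + 1 by ring, double_succ, recip_add_altRecip_odd, mul_zero,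
    add_zero, ← hm] at h
  rw [h, double, double, mul_sum]
  refine sum_congr rfl fun k _ => ?_
  rw [pow_add, mul_mul_mul_comm, two_pow_mul_recip_add_altRecip_even (by omega) t k]
  congr 1
  rw [single, single, mul_sum]
  exact sum_congr rfl fun k _ => two_pow_mul_recip_add_altRecip_even (by omega) s k

lemma double_recip_one_two_split {m : ℕ} (hm : p = 2 * m + 1) :
    double p (recip p 1) (recip p 2) =
      2 * double (m + 1) (recip p 1) (recip p 2) + single (m + 1) (recip p 3) := by
  have h2 := reflects_recip (p := p) two_ne_zero
  have h := sum_range_odd_fold m (fun j => single j (recip p 1) * recip p 2 j)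
    (by rw [← hm, h2.map_self, mul_zero])
  rw [← hm] at h
  rw [double, h, double, single, mul_sum, ← sum_add_distrib]
  refine sum_congr rfl fun j hj => ?_
  have hj' : j ≤ p := by have := mem_range.1 hj; omega
  have h3 : recip p 1 j * recip p 2 j = recip p 3 j := congrFun (recip_mul_recip p 1 2) j
  rw [(reflects_recip one_ne_zero).single_sub hj', h2.map_sub j hj', single_succ,
    single_recip_eq_zero_of_odd (by omega) odd_one]
  linear_combination h3

lemma two_mul_double_recip_two_altRecip (hp : 3 < p) :
    2 * double p (recip p 2) (altRecip p 1) = -single p (altRecip p 3) := by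
  have h := single_mul_single p (recip p 2) (altRecip p 1)
  rw [single_recip_two hp, recip_mul_altRecip] at h
  have h' := (reflects_recip (p := p) two_ne_zero).double_eq
    (reflects_altRecip (by omega) one_ne_zero)
  norm_num at h h'
  linear_combination -h + h'

lemma two_mul_double_recip_altRecip_two (hp : 3 < p) :
    2 * double p (recip p 1) (altRecip p 2) = -single p (altRecip p 3) := by
  have h := single_mul_single p (recip p 1) (altRecip p 2)
  rw [single_recip_eq_zero_of_odd (by omega) odd_one, recip_mul_altRecip] at h
  have h' := (reflects_recip (p := p) one_ne_zero).double_eq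
    (reflects_altRecip (by omega) two_ne_zero)
  norm_num at h h'
  linear_combination -h + h'

lemma two_mul_double_altRecip_two_altRecip (hp : 3 < p) :
    2 * double p (altRecip p 2) (altRecip p 1) = -3 * single p (altRecip p 3) := by
  linear_combination 2 * double_altRecip_two_altRecip (p := p) (by omega) +
    two_mul_double_recip_two_altRecip hp + 2 * two_mul_double_recip_altRecip_two hp

lemma four_mul_double_recip_altRecip (hp : 3 < p) :
    4 * double p (recip p 1) (altRecip p 1) = single p (altRecip p 1) ^ 2 := by
  have h := single_mul_single p (altRecip p 1) (altRecip p 1)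
  rw [altRecip_mul_altRecip, single_recip_two hp] at h
  linear_combination -2 * double_altRecip_altRecip (p := p) (by omega) - h

lemma double_recip_one_two (hp : 3 < p) :
    double p (recip p 1) (recip p 2) = -2 * single p (altRecip p 3) := by
  obtain ⟨m, hm⟩ := Fact.out (p := p.Prime).odd_of_ne_two (by omega)
  have h3 : (3 : ZMod p) ≠ 0 := by exact_mod_cast natCast_ne_zero_of_lt three_pos hp
  have hs := single_half hm 2
  have hd := double_half hm 0 1
  rw [single_add, single_recip_eq_zero_of_odd (by omega) (by decide)] at hs
  rw [double_add_add] at hd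
  have h1 := (reflects_recip (p := p) two_ne_zero).double_eq
    (reflects_altRecip (by omega) one_ne_zero)
  have h2 := (reflects_altRecip (p := p) (by omega) one_ne_zero).double_eq
    (reflects_altRecip (by omega) two_ne_zero)
  norm_num at hs hd h1 h2
  have h4 := double_recip_one_two_split hm
  refine mul_left_cancel₀ h3 ?_
  linear_combination -h4 + 2 * hd + hs + 2 * two_mul_double_altRecip_two_altRecip hp - 4 * h2 -
    2 * two_mul_double_recip_two_altRecip hp - 2 * two_mul_double_recip_altRecip_two hp + 4 * h1

lemma eight_mul_triple_recip_altRecip_altRecip (hp : 3 < p) :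
    8 * triple p (recip p 1) (altRecip p 1) (altRecip p 1) =
      single p (altRecip p 1) ^ 3 + 14 * single p (altRecip p 3) := by
  have h := single_mul_double p (altRecip p 1) (recip p 1) (altRecip p 1)
  rw [altRecip_mul_recip, altRecip_mul_altRecip] at h
  have h0 : triple p (altRecip p 1) (recip p 1) (altRecip p 1) = 0 :=
    eq_zero_of_eq_neg (by omega) <| by
      simpa using (reflects_altRecip (p := p) (by omega) one_ne_zero).triple_eq
        (reflects_recip one_ne_zero)
  norm_num at h
  linear_combination -4 * h - 4 * h0 - 2 * two_mul_double_altRecip_two_altRecip hp -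
    4 * double_recip_one_two hp + single p (altRecip p 1) * four_mul_double_recip_altRecip hp

lemma sum_single_recip_sq_mul (n : ℕ) (f : ℕ → ZMod p) :
    ∑ j ∈ range n, single j (recip p 1) ^ 2 * f j =
      2 * triple n (recip p 1) (recip p 1) f + double n (recip p 2) f := by
  rw [triple, double, mul_sum, ← sum_add_distrib]
  refine sum_congr rfl fun j _ => ?_
  have h := single_mul_single j (recip p 1) (recip p 1)
  rw [recip_mul_recip] at h
  linear_combination f j * h

lemma sum_single_recip_sq_mul_recip (hp : 3 < p) :
    ∑ j ∈ range p, single j (recip p 1) ^ 2 * recip p 1 j = 2 * single p (altRecip p 3) := by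
  have h0 : triple p (recip p 1) (recip p 1) (recip p 1) = 0 :=
    eq_zero_of_eq_neg (by omega) <| by
      simpa using (reflects_recip (p := p) one_ne_zero).triple_eq (reflects_recip one_ne_zero)
  have h := (reflects_recip (p := p) two_ne_zero).double_eq (reflects_recip one_ne_zero)
  norm_num at h
  rw [sum_single_recip_sq_mul]
  linear_combination 2 * h0 + h - double_recip_one_two hp

lemma twelve_mul_sum_single_recip_sq_mul_altRecip (hp : 3 < p) :
    12 * ∑ j ∈ range p, single j (recip p 1) ^ 2 * altRecip p 1 j =
      single p (altRecip p 1) ^ 3 + 8 * single p (altRecip p 3) := by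
  rw [sum_single_recip_sq_mul]
  linear_combination -8 * triple_recip_altRecip_altRecip (p := p) (by omega) +
    eight_mul_triple_recip_altRecip_altRecip hp + 6 * two_mul_double_recip_two_altRecip hp

lemma sum_even_sub (m : ℕ) (f : ℕ → ZMod p) (h0 : f 0 = 0) :
    ∑ k ∈ range m, (f (2 * k + 1) - f (2 * k + 2)) = -∑ j ∈ range (2 * m + 1), (-1) ^ j * f j := by
  induction m with
  | zero => simp [h0]
  | succ m ih =>
    rw [sum_range_succ, ih, show 2 * (m + 1) + 1 = 2 * m + 1 + 1 + 1 by ring,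
      sum_range_succ _ (2 * m + 1 + 1), sum_range_succ _ (2 * m + 1)]
    simp only [pow_succ, pow_mul]
    norm_num
    ring

/-- `12` times the sum of `H_{2k} H_{2k-2} / k` over `1 ≤ k ≤ (p - 1) / 2`, modulo `p`. -/
lemma twelve_mul_sum_harmonic (hp : 3 < p) {m : ℕ} (hm : p = 2 * m + 1) :
    12 * ∑ k ∈ range m, single (2 * k + 3) (recip p 1) * single (2 * k + 1) (recip p 1) *
        ((k + 1 : ℕ) : ZMod p)⁻¹ =
      24 * single p (altRecip p 1) + 6 * single p (altRecip p 1) ^ 2 +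
        single p (altRecip p 1) ^ 3 + 2 * single p (altRecip p 3) := by
  let L : ℕ → ZMod p := fun n => (single (n + 1) (recip p 1) + 1) * recip p 1 n
  let G : ℕ → ZMod p := fun j => single j (recip p 1) ^ 2 * (recip p 1 + altRecip p 1) j +
    single j (recip p 1) * (recip p 2 + altRecip p 2) j
  have hL : ∑ j ∈ range p, (-1) ^ j * L j =
      double p (recip p 1) (altRecip p 1) + single p (altRecip p 2) + single p (altRecip p 1) := by
    rw [double, single, single, ← sum_add_distrib, ← sum_add_distrib]
    refine sum_congr rfl fun j _ => ?_
    simp only [L, single_succ, recip, altRecip]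
    ring
  have hG : single p G = ∑ j ∈ range p, single j (recip p 1) ^ 2 * recip p 1 j +
      ∑ j ∈ range p, single j (recip p 1) ^ 2 * altRecip p 1 j + double p (recip p 1) (recip p 2) +
      double p (recip p 1) (altRecip p 2) := by
    rw [double, double, single, ← sum_add_distrib, ← sum_add_distrib, ← sum_add_distrib]
    refine sum_congr rfl fun j _ => ?_
    simp only [G, Pi.add_apply]
    ring
  have hG_odd (k : ℕ) : G (2 * k + 1) = 0 := by
    simp only [G, recip_add_altRecip_odd, mul_zero, add_zero]
  have hG' : single p G = ∑ k ∈ range m, G (2 * k + 2) := by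
    have h := single_two_mul (m + 1) G hG_odd
    rw [show 2 * (m + 1) = 2 * m + 1 + 1 by ring, single_succ, hG_odd, add_zero, ← hm,
      single.eq_1 (m + 1), sum_range_succ'] at h
    rw [h]
    simp [G, mul_add]
  have hsum : ∑ k ∈ range m, single (2 * k + 3) (recip p 1) * single (2 * k + 1) (recip p 1) *
        ((k + 1 : ℕ) : ZMod p)⁻¹ =
      single p G - 2 * ∑ k ∈ range m, (L (2 * k + 1) - L (2 * k + 2)) := by
    rw [hG', mul_sum, ← sum_sub_distrib]
    refine sum_congr rfl fun k hk => ?_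
    have hk' := mem_range.1 hk
    have h2 : (2 : ZMod p) ≠ 0 := by exact_mod_cast natCast_ne_zero_of_lt two_pos (by omega)
    have e1 := natCast_ne_zero_of_lt (by omega : 0 < k + 1) (by omega : k + 1 < p)
    have e2 := natCast_ne_zero_of_lt (by omega : 0 < 2 * k + 1) (by omega : 2 * k + 1 < p)
    have hpow : (-1 : ZMod p) ^ (2 * k + 2) = 1 := by simp [pow_add, pow_mul]
    have hs : single (2 * k + 2) (recip p 1) =
        single (2 * k + 1) (recip p 1) + recip p 1 (2 * k + 1) :=
      single_succ ..
    have hs' : single (2 * k + 3) (recip p 1) =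
        single (2 * k + 2) (recip p 1) + recip p 1 (2 * k + 2) :=
      single_succ ..
    have hc : ((2 * k + 2 : ℕ) : ZMod p) = 2 * (k + 1 : ℕ) := by push_cast; ring
    simp only [G, L, Pi.add_apply, show 2 * k + 1 + 1 = 2 * k + 2 from rfl,
      show 2 * k + 2 + 1 = 2 * k + 3 from rfl, hs', hs, recip, altRecip, hpow, hc]
    generalize single (2 * k + 1) (fun j => recip p 1 j) = s
    push_cast at e1 e2 ⊢
    field_simp
    ring
  have hLs := sum_even_sub m L (by simp [L])
  rw [← hm, hL, single_altRecip_eq_zero_of_even (by omega) even_two two_ne_zero] at hLs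
  rw [hsum, hLs, hG]
  linear_combination 12 * sum_single_recip_sq_mul_recip hp +
    twelve_mul_sum_single_recip_sq_mul_altRecip hp + 12 * double_recip_one_two hp +
    6 * two_mul_double_recip_altRecip_two hp + 6 * four_mul_double_recip_altRecip hp

end ModP

section Reduction

variable {p : ℕ} [Fact p.Prime]

/-- The rational `x` is `p`-integral and its residue class modulo `p` is `a`. -/
def ReducesTo (x : ℚ) (a : ZMod p) : Prop :=
  ∃ (n : ℤ) (d : ℕ), (d : ZMod p) ≠ 0 ∧ x = n / d ∧ a = n / d

namespace ReducesTo

variable {x y : ℚ} {a b : ZMod p}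

lemma natCast_ne_zero {d : ℕ} (hd : (d : ZMod p) ≠ 0) : (d : ℚ) ≠ 0 := by
  rintro h
  exact hd (by simp [Nat.cast_eq_zero.1 h])

lemma intCast (n : ℤ) : ReducesTo (n : ℚ) (n : ZMod p) := ⟨n, 1, by simp⟩

lemma natCast (n : ℕ) : ReducesTo (n : ℚ) (n : ZMod p) := by simpa using intCast (p := p) n

lemma inv_natCast {d : ℕ} (hd : (d : ZMod p) ≠ 0) : ReducesTo (d : ℚ)⁻¹ (d : ZMod p)⁻¹ :=
  ⟨1, d, hd, by simp⟩

lemma add (hx : ReducesTo x a) (hy : ReducesTo y b) : ReducesTo (x + y) (a + b) := by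
  obtain ⟨n, d, hd, rfl, rfl⟩ := hx
  obtain ⟨n', d', hd', rfl, rfl⟩ := hy
  have h := natCast_ne_zero hd
  have h' := natCast_ne_zero hd'
  refine ⟨n * d' + d * n', d * d', by simpa using ⟨hd, hd'⟩, ?_, ?_⟩ <;> push_cast
  · rw [div_add_div _ _ h h']
  · rw [div_add_div _ _ hd hd']

lemma mul (hx : ReducesTo x a) (hy : ReducesTo y b) : ReducesTo (x * y) (a * b) := by
  obtain ⟨n, d, hd, rfl, rfl⟩ := hx
  obtain ⟨n', d', hd', rfl, rfl⟩ := hy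
  refine ⟨n * n', d * d', by simpa using ⟨hd, hd'⟩, ?_, ?_⟩ <;> push_cast <;>
    rw [div_mul_div_comm]

lemma neg (hx : ReducesTo x a) : ReducesTo (-x) (-a) := by
  simpa using (intCast (p := p) (-1)).mul hx

lemma sub (hx : ReducesTo x a) (hy : ReducesTo y b) : ReducesTo (x - y) (a - b) := by
  simpa [sub_eq_add_neg] using hx.add hy.neg

lemma pow (hx : ReducesTo x a) (n : ℕ) : ReducesTo (x ^ n) (a ^ n) := by
  induction n with
  | zero => simpa using natCast (p := p) 1
  | succ n ih => simpa [pow_succ] using ih.mul hx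

lemma sum {ι : Type*} {s : Finset ι} {f : ι → ℚ} {g : ι → ZMod p}
    (h : ∀ i ∈ s, ReducesTo (f i) (g i)) : ReducesTo (∑ i ∈ s, f i) (∑ i ∈ s, g i) := by
  classical
  induction s using Finset.induction_on with
  | empty => simpa using natCast (p := p) 0
  | insert i s hi ih =>
    rw [sum_insert hi, sum_insert hi]
    exact (h i (mem_insert_self i s)).add (ih fun j hj => h j (mem_insert_of_mem hj))

lemma unique (hx : ReducesTo x a) (hy : ReducesTo x b) : a = b := by
  obtain ⟨n, d, hd, h, h'⟩ := hx.sub hy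
  rw [sub_self, eq_comm, div_eq_zero_iff, or_iff_left (natCast_ne_zero hd), Int.cast_eq_zero] at h
  rw [← sub_eq_zero, h', h, Int.cast_zero, zero_div]

lemma exists_eq_mul (hx : ReducesTo x (0 : ZMod p)) :
    ∃ c : ℚ, x = c * (p : ℚ) ^ 1 ∧ ¬ p ∣ c.den := by
  obtain ⟨n, d, hd, rfl, h⟩ := hx
  rw [eq_comm, div_eq_zero_iff, or_iff_left hd, ZMod.intCast_zmod_eq_zero_iff_dvd] at h
  obtain ⟨k, rfl⟩ := h
  refine ⟨k / d, by push_cast; ring, fun hdvd => hd ?_⟩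
  rw [ZMod.natCast_eq_zero_iff]
  have h := Rat.den_dvd k d
  rw [Rat.divInt_eq_div] at h
  exact hdvd.trans (by exact_mod_cast h)

lemma harmonic {n : ℕ} (hn : n < p) :
    ReducesTo (harmonic n) (single (n + 1) (recip p 1)) := by
  rw [single, sum_range_succ', recip_one_zero, add_zero]
  refine sum fun i hi => ?_
  have := mem_range.1 hi
  rw [recip, pow_one]
  exact inv_natCast (natCast_ne_zero_of_lt (by omega) (by omega))

lemma exists_bernoulli' {n : ℕ} (hn : n < p - 1) :
    ∃ b : ZMod p, ReducesTo (bernoulli' n) b := by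
  induction n using Nat.strong_induction_on with
  | _ n ih =>
    choose! b hb using fun m (hm : m < n) => ih m hm (hm.trans hn)
    refine ⟨1 - ∑ k ∈ range n, (n.choose k : ZMod p) * ((n - k + 1 : ℕ) : ZMod p)⁻¹ * b k, ?_⟩
    rw [bernoulli'_def]
    refine sub (by simpa using natCast (p := p) 1) (sum fun k hk => ?_)
    have hk' := mem_range.1 hk
    have h : (n : ℚ) - k + 1 = (n - k + 1 : ℕ) := by push_cast [hk'.le]; ring
    rw [h, div_eq_mul_inv]
    exact ((natCast _).mul (inv_natCast (natCast_ne_zero_of_lt (by omega) (by omega)))).mul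
      (hb k hk')

lemma exists_bernoulli {n : ℕ} (hn : n < p - 1) : ∃ b : ZMod p, ReducesTo (bernoulli n) b := by
  obtain ⟨b, hb⟩ := exists_bernoulli' hn
  exact ⟨(-1) ^ n * b, by simpa [bernoulli] using ((intCast (p := p) (-1)).pow n).mul hb⟩

end ReducesTo

lemma choose_pred_prime {k : ℕ} (hk : k < p) : ((p - 1).choose k : ZMod p) = (-1) ^ k := by
  have hp := Fact.out (p := p.Prime)
  induction k with
  | zero => simp
  | succ k ih =>
    have h := Nat.choose_succ_succ' (p - 1) k
    rw [Nat.sub_add_cancel hp.one_le] at h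
    have h' : (p.choose (k + 1) : ZMod p) = 0 :=
      (ZMod.natCast_eq_zero_iff ..).2 (hp.dvd_choose_self k.succ_ne_zero hk)
    rw [h, Nat.cast_add, ih (by omega)] at h'
    rw [pow_succ]
    linear_combination h'

lemma reducesTo_fermatQ (hp : p ≠ 2) :
    ∃ q : ZMod p, ReducesTo (fermatQ p) q ∧ single p (altRecip p 1) = -2 * q := by
  have hp' := Fact.out (p := p.Prime)
  have hp0 : (p : ℤ) ≠ 0 := by exact_mod_cast hp'.ne_zero
  have h2 : ((2 : ℤ) ^ (p - 1) - 1 : ℤ) ≡ 0 [ZMOD p] := by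
    rw [← ZMod.intCast_eq_intCast_iff]
    have h2 : (2 : ZMod p) ≠ 0 := by
      exact_mod_cast natCast_ne_zero_of_lt two_pos (lt_of_le_of_ne hp'.two_le hp.symm)
    push_cast
    rw [ZMod.pow_card_sub_one_eq_one h2, sub_self]
  obtain ⟨n, hn⟩ := Int.modEq_zero_iff_dvd.1 h2
  refine ⟨n, ?_, ?_⟩
  · have : fermatQ p = n := by
      rw [fermatQ, div_eq_iff (by exact_mod_cast hp'.ne_zero), mul_comm]
      exact_mod_cast hn
    rw [this]
    exact ReducesTo.intCast n
  · have h := add_pow_prime_eq hp' (1 : ℤ) 1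
    have h' : ∑ k ∈ Ioo 0 p, ((p.choose k / p : ℕ) : ℤ) = 2 * n := by
      apply mul_left_cancel₀ hp0
      have hpow : (2 : ℤ) ^ p = 2 * 2 ^ (p - 1) := by
        rw [← pow_succ', Nat.sub_add_cancel hp'.one_le]
      simp only [one_pow, one_mul, one_add_one_eq_two, hpow] at h
      linear_combination -h + 2 * hn
    have h'' := congrArg (Int.cast : ℤ → ZMod p) h'
    rw [Int.cast_sum, Int.cast_mul, Int.cast_ofNat] at h''
    simp only [Int.cast_natCast] at h''
    have hs : single p (altRecip p 1) = ∑ k ∈ Ioo 0 p, altRecip p 1 k := by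
      rw [single, range_eq_Ico, ← Ioo_insert_left hp'.pos, sum_insert (by simp),
        altRecip_one_zero, zero_add]
    rw [hs, neg_mul, ← h'', ← sum_neg_distrib]
    refine sum_congr rfl fun k hk => ?_
    obtain ⟨hk0, hkp⟩ := mem_Ioo.1 hk
    obtain ⟨D, hD⟩ := hp'.dvd_choose_self hk0.ne' hkp
    obtain ⟨j, rfl⟩ := Nat.exists_eq_add_of_lt hk0
    have hc := Nat.add_one_mul_choose_eq (p - 1) j
    rw [Nat.sub_add_cancel hp'.one_le] at hc
    rw [zero_add] at *
    rw [hD, Nat.mul_div_cancel_left _ hp'.pos]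
    rw [hD, mul_assoc] at hc
    have hc' := congrArg (Nat.cast : ℕ → ZMod p) (Nat.eq_of_mul_eq_mul_left hp'.pos hc)
    rw [choose_pred_prime (by omega)] at hc'
    push_cast at hc'
    have hne := natCast_ne_zero_of_lt hk0 hkp
    push_cast at hne
    rw [altRecip, pow_one, pow_succ, hc']
    push_cast
    field_simp

lemma sum_range_pow_eq (e : ℕ) (he : e < 2 * p - 3) (hp : 3 < p) :
    ∑ k ∈ range p, (k : ZMod p) ^ e = if e = p - 1 then -1 else 0 := by
  rw [sum_range_natCast fun x => x ^ e]
  rcases lt_trichotomy e (p - 1) with h | h | h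
  · rw [if_neg h.ne]
    exact FiniteField.sum_pow_lt_card_sub_one _ _ (by rwa [ZMod.card])
  · rw [if_pos h, h]
    have h1 (x : ZMod p) : x ^ (p - 1) = 1 - if x = 0 then 1 else 0 := by
      split_ifs with hx
      · rw [hx, zero_pow (by omega), sub_self]
      · rw [ZMod.pow_card_sub_one_eq_one hx, sub_zero]
    simp [h1]
  · rw [if_neg h.ne']
    have h1 (x : ZMod p) : x ^ e = x ^ (e - (p - 1)) := by
      conv_lhs => rw [show e = e - p + p by omega, pow_add, ZMod.pow_card, ← pow_succ,
        show e - p + 1 = e - (p - 1) by omega]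
    simp only [h1]
    exact FiniteField.sum_pow_lt_card_sub_one _ _ (by rw [ZMod.card]; omega)

lemma reducesTo_bernoulli (hp : 3 < p) :
    ReducesTo (bernoulli (p - 3)) (double p (recip p 1) (recip p 2)) := by
  choose! b hb using fun n (hn : n < p - 1) => ReducesTo.exists_bernoulli (p := p) hn
  have hodd : Odd p := Fact.out (p := p.Prime).odd_of_ne_two (by omega)
  have hpm : ((p - 1 : ℕ) : ZMod p) = -1 := by simp [Nat.cast_sub (by omega : 1 ≤ p)]
  have hs (n : ℕ) : single n (recip p 1) =
      ∑ i ∈ range (p - 1), -(b i * (-1) ^ i * (n : ZMod p) ^ (p - 1 - i)) := by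
    have h1 : ReducesTo (∑ k ∈ range n, (k : ℚ) ^ (p - 2)) (single n (recip p 1)) := by
      refine ReducesTo.sum fun k _ => ?_
      rw [recip, pow_one, inv_eq_pow_sub_two (by omega)]
      exact (ReducesTo.natCast k).pow _
    refine h1.unique ?_
    have hcast : ((p - 2 : ℕ) : ℚ) + 1 = (p - 1 : ℕ) := by
      rw [show p - 1 = p - 2 + 1 by omega, Nat.cast_succ]
    rw [sum_range_pow, hcast, show p - 2 + 1 = p - 1 by omega]
    refine ReducesTo.sum fun i hi => ?_
    have hi' := mem_range.1 hi
    have h2 := (((hb i hi').mul (ReducesTo.natCast ((p - 1).choose i))).mul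
      ((ReducesTo.natCast n).pow (p - 1 - i))).mul
      (ReducesTo.inv_natCast (natCast_ne_zero_of_lt (by omega : 0 < p - 1) (by omega : p - 1 < p)))
    rw [choose_pred_prime (by omega), hpm] at h2
    simpa [div_eq_mul_inv] using h2
  have hd : double p (recip p 1) (recip p 2) = b (p - 3) := by
    simp only [double, hs, recip, inv_sq_eq_pow_sub_three hp, sum_mul]
    rw [sum_comm]
    have hi (i : ℕ) (hi : i ∈ range (p - 1)) :
        ∑ n ∈ range p, -(b i * (-1) ^ i * (n : ZMod p) ^ (p - 1 - i)) * (n : ZMod p) ^ (p - 3) =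
          if i = p - 3 then b (p - 3) else 0 := by
      have hi' := mem_range.1 hi
      have h := sum_range_pow_eq (p := p) (p - 1 - i + (p - 3)) (by omega) hp
      have hterm (n : ℕ) : -(b i * (-1) ^ i * (n : ZMod p) ^ (p - 1 - i)) * (n : ZMod p) ^ (p - 3) =
          -(b i * (-1) ^ i) * (n : ZMod p) ^ (p - 1 - i + (p - 3)) := by rw [pow_add]; ring
      simp only [hterm, ← mul_sum, h]
      by_cases hip : i = p - 3
      · have heven : Even (p - 3) := Nat.Odd.sub_odd hodd (by decide)
        rw [if_pos (by omega), if_pos hip, hip, heven.neg_one_pow]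
        ring
      · rw [if_neg (by omega), if_neg hip, mul_zero]
    rw [sum_congr rfl hi, sum_ite_eq', if_pos (mem_range.2 (by omega))]
  rw [hd]
  exact hb _ (by omega)

end Reduction

end NestedSum

open NestedSum

theorem sum_H2k_H2k_sub_two_div_k (p : ℕ) (hp : p.Prime) (hp3 : 3 < p) :
    ratCongr p 1
      (∑ k ∈ Finset.Icc 1 ((p - 1) / 2), harmonic (2 * k) * harmonic (2 * k - 2) / k)
      (-4 * fermatQ p + 2 * fermatQ p ^ 2 - (2 / 3) * fermatQ p ^ 3 -
        (1 / 12) * bernoulli (p - 3)) := by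
  have : Fact p.Prime := ⟨hp⟩
  obtain ⟨m, hm⟩ := hp.odd_of_ne_two (by omega)
  obtain ⟨q, hq, hq'⟩ := reducesTo_fermatQ (p := p) (by omega)
  have h2 : ((2 : ℕ) : ZMod p) ≠ 0 := natCast_ne_zero_of_lt two_pos (by omega)
  have h3 : ((3 : ℕ) : ZMod p) ≠ 0 := natCast_ne_zero_of_lt three_pos hp3
  have h12 : ((12 : ℕ) : ZMod p) ≠ 0 := by
    rw [show 12 = 2 * 2 * 3 by rfl, Nat.cast_mul, Nat.cast_mul]
    exact mul_ne_zero (mul_ne_zero h2 h2) h3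
  have hsum : ReducesTo
      (∑ k ∈ Finset.Icc 1 ((p - 1) / 2), harmonic (2 * k) * harmonic (2 * k - 2) / k)
      (∑ k ∈ range m, single (2 * k + 3) (recip p 1) * single (2 * k + 1) (recip p 1) *
        ((k + 1 : ℕ) : ZMod p)⁻¹) := by
    rw [show (p - 1) / 2 = m by omega, ← Finset.Ico_add_one_right_eq_Icc, sum_Ico_eq_sum_range,
      Nat.add_sub_cancel]
    refine ReducesTo.sum fun k hk => ?_
    have hk' := mem_range.1 hk
    rw [show 2 * (1 + k) - 2 = 2 * k by omega, show 2 * (1 + k) = 2 * k + 2 by ring, add_comm 1 k,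
      div_eq_mul_inv]
    exact ((ReducesTo.harmonic (by omega)).mul (ReducesTo.harmonic (by omega))).mul
      (ReducesTo.inv_natCast (natCast_ne_zero_of_lt (by omega) (by omega)))
  have hB := reducesTo_bernoulli hp3
  have hrhs := ((((ReducesTo.intCast (p := p) (-4)).mul hq).add
    ((ReducesTo.natCast 2).mul (hq.pow 2))).sub
    (((ReducesTo.natCast 2).mul (ReducesTo.inv_natCast h3)).mul (hq.pow 3))).sub
    ((ReducesTo.inv_natCast h12).mul hB)
  have hmain := hsum.sub hrhs
  have hval := twelve_mul_sum_harmonic hp3 hm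
  rw [hq'] at hval
  have hBval := double_recip_one_two hp3
  push_cast at hmain hval h3 h12
  rw [← div_eq_mul_inv, ← one_div (12 : ℚ)] at hmain
  refine ReducesTo.exists_eq_mul (p := p) ?_
  convert hmain using 1
  rw [eq_comm]
  refine (mul_eq_zero.1 (?_ : 12 * _ = (0 : ZMod p))).resolve_left h12
  linear_combination hval + 8 * q ^ 3 * mul_inv_cancel₀ h3 +
    double p (recip p 1) (recip p 2) * mul_inv_cancel₀ h12 + hBval
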